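/- arXiv:2304.12268 — 12 statements merged into one kernel-verified Lean document; each statement's English description precedes it below -/
import Mathlib

section
/- Let N be a finite set of players with a distinguished platform player w_p ∈ N, and let S be a finite index set of sessions, where session s is an owner map P_s : {0,1,…,n_s} → N (n_s ≥ 1) with P_s(0) = w_p and P_s(k) ≠ w_p for 1 ≤ k ≤ n_s, together with revenues r_s : {1,…,n_s} → ℝ satisfying r_s(k) ≥ 0 for all k. Then the multi-session game V under Assumptions 1 and 2 is convex (supermodular): for every player i ∈ N and all coalitions F ⊆ G ⊆ N∖{i}, V(F∪{i}) − V(F) ≤ V(G∪{i}) − V(G). -/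
open Finset

/-- The multi-session game `V` under Assumptions 1 and 2 is convex
(supermodular): for every player `i` and coalitions `F ⊆ G ⊆ N \ {i}`,
`V (F ∪ {i}) − V F ≤ V (G ∪ {i}) − V G`. -/
theorem multi_session_game_A12_convex
    {N : Type*} [Fintype N] [DecidableEq N] {ι : Type*}
    (wp : N) (S : Finset ι) (ns : ι → ℕ) (P : ι → ℕ → N) (r : ι → ℕ → ℝ)
    (hns : ∀ s ∈ S, 1 ≤ ns s)
    (hP0 : ∀ s ∈ S, P s 0 = wp)
    (hPk : ∀ s ∈ S, ∀ k, 1 ≤ k → k ≤ ns s → P s k ≠ wp)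
    (hr : ∀ s ∈ S, ∀ k, 1 ≤ k → k ≤ ns s → 0 ≤ r s k)
    (V : Finset N → ℝ)
    (hV : ∀ F : Finset N, V F = ∑ s ∈ S, ∑ k ∈ Finset.Icc 1 (ns s),
      if (Finset.range (k + 1)).image (P s) ⊆ F then r s k else 0)
    (i : N) (F G : Finset N) (hFG : F ⊆ G) (hiG : i ∉ G) :
    V (insert i F) - V F ≤ V (insert i G) - V G := by
  simp only [hV, ← Finset.sum_sub_distrib]
  refine Finset.sum_le_sum fun s hs => Finset.sum_le_sum fun k hk => ?_
  rw [Finset.mem_Icc] at hk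
  have h0 := hr s hs k hk.1 hk.2
  generalize (Finset.range (k + 1)).image (P s) = A
  have h1 : A ⊆ F → A ⊆ G := fun h => h.trans hFG
  have h2 : A ⊆ F → A ⊆ insert i F := fun h => h.trans (Finset.subset_insert i F)
  have h3 : A ⊆ G → A ⊆ insert i G := fun h => h.trans (Finset.subset_insert i G)
  have h4 : A ⊆ insert i F → A ⊆ insert i G :=
    fun h => h.trans (Finset.insert_subset_insert i hFG)
  have h5 : A ⊆ insert i F → A ⊆ G → A ⊆ F := by
    intro h h' x hx
    rcases Finset.mem_insert.1 (h hx) with e | e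
    · exact absurd (e ▸ h' hx) hiG
    · exact e
  by_cases a : A ⊆ F <;> by_cases b : A ⊆ G <;> by_cases c : A ⊆ insert i F <;>
    by_cases d : A ⊆ insert i G <;> simp only [a, b, c, d, if_true, if_false] <;>
    first
    | linarith
    | (exfalso; tauto)
end

section
/- Let N be a finite set of players with a distinguished platform player w_p ∈ N, and let S be a finite index set of sessions, where session s is an owner map P_s : {0,1,…,n_s} → N (n_s ≥ 1) with P_s(0) = w_p and P_s(k) ≠ w_p for 1 ≤ k ≤ n_s, together with revenues r_s : {1,…,n_s} → ℝ satisfying r_s(k) ≥ 0 for all k. Then the multi-session game Ṽ under Assumptions 1 and 3 is convex (supermodular): for every player i ∈ N and all coalitions F ⊆ G ⊆ N∖{i}, Ṽ(F∪{i}) − Ṽ(F) ≤ Ṽ(G∪{i}) − Ṽ(G). -/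
open Finset

/-- The multi-session game `Ṽ` under Assumptions 1 and 3 is convex
(supermodular): for every player `i` and coalitions `F ⊆ G ⊆ N \ {i}`,
`Ṽ (F ∪ {i}) − Ṽ F ≤ Ṽ (G ∪ {i}) − Ṽ G`. -/
theorem multi_session_game_A13_convex
    {N : Type*} [Fintype N] [DecidableEq N] {ι : Type*}
    (wp : N) (S : Finset ι) (ns : ι → ℕ) (P : ι → ℕ → N) (r : ι → ℕ → ℝ)
    (hns : ∀ s ∈ S, 1 ≤ ns s)
    (hP0 : ∀ s ∈ S, P s 0 = wp)
    (hPk : ∀ s ∈ S, ∀ k, 1 ≤ k → k ≤ ns s → P s k ≠ wp)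
    (hr : ∀ s ∈ S, ∀ k, 1 ≤ k → k ≤ ns s → 0 ≤ r s k)
    (Vt : Finset N → ℝ)
    (hVt : ∀ F : Finset N, Vt F = ∑ s ∈ S, ∑ k ∈ Finset.Icc 1 (ns s),
      if ({P s 0, P s k} : Finset N) ⊆ F then r s k else 0)
    (i : N) (F G : Finset N) (hFG : F ⊆ G) (hiG : i ∉ G) :
    Vt (insert i F) - Vt F ≤ Vt (insert i G) - Vt G := by
  simp only [hVt, ← Finset.sum_sub_distrib]
  refine Finset.sum_le_sum fun s hs => Finset.sum_le_sum fun k hk => ?_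
  rw [Finset.mem_Icc] at hk
  have h0 := hr s hs k hk.1 hk.2
  generalize ({P s 0, P s k} : Finset N) = T
  have h1 : T ⊆ F → T ⊆ G := fun h => h.trans hFG
  have h2 : T ⊆ insert i F → T ⊆ insert i G :=
    fun h => h.trans (Finset.insert_subset_insert i hFG)
  have h3 : T ⊆ G → T ⊆ insert i G := fun h => h.trans (Finset.subset_insert i G)
  have h4 : T ⊆ F → T ⊆ insert i F := fun h => h.trans (Finset.subset_insert i F)
  have h5 : T ⊆ insert i F → T ⊆ G → T ⊆ F := by
    intro h h' x hx
    rcases Finset.mem_insert.1 (h hx) with rfl | hxF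
    · exact absurd (h' hx) hiG
    · exact hxF
  split_ifs <;> first | linarith | (exfalso; tauto)
end

section
/- Let N be a finite set of players with a distinguished platform player w_p ∈ N, and let a session be given by an owner map P : {0,1,…,n} → N (n ≥ 1) with P(0) = w_p and P(k) ≠ w_p for 1 ≤ k ≤ n, and revenues r : {1,…,n} → ℝ. Let v be the single-session game under Assumptions 1 and 2. Then for every player i ∈ N, the Shapley value of i in v equals Sh_i(v) = Σ_{k=1}^{n} ([i ∈ P(E^k)] / n^p_k) · r(k), where [i ∈ P(E^k)] is 1 if i ∈ P(E^k) and 0 otherwise. -/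
open Finset

lemma unan_arith (a b : ℕ) :
    ∑ g ∈ range (b + 1), (b.choose g) • (((a + g).factorial * (b - g).factorial : ℝ) /
      ((a + b + 1).factorial : ℝ)) = 1 / ((a + 1 : ℕ) : ℝ) := by
  have h1 : ∀ g ∈ range (b + 1), (b.choose g) • (((a + g).factorial * (b - g).factorial : ℝ) /
      ((a + b + 1).factorial : ℝ)) =
      (b.factorial * a.factorial / ((a + b + 1).factorial : ℝ)) * ((g + a).choose a : ℕ) := by
    intro g hg
    have hg' : g ≤ b := by simpa [Nat.lt_succ_iff] using hg
    have e1 : (b.choose g * g.factorial * (b - g).factorial : ℝ) = b.factorial := by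
      exact_mod_cast Nat.choose_mul_factorial_mul_factorial hg'
    have e2 : ((g + a).choose a * g.factorial * a.factorial : ℝ) = (a + g).factorial := by
      have := Nat.add_choose_mul_factorial_mul_factorial g a
      rw [add_comm a g]
      exact_mod_cast this
    rw [nsmul_eq_mul, ← e1, ← e2]
    ring
  rw [sum_congr rfl h1, ← mul_sum, ← Nat.cast_sum, Nat.sum_range_add_choose]
  have e3 := Nat.choose_mul_factorial_mul_factorial (n := b + a + 1) (k := a + 1) (by omega)
  rw [show b + a + 1 - (a + 1) = b by omega, Nat.factorial_succ a] at e3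
  have e4 : ((b + a + 1).choose (a + 1) * ((a + 1 : ℕ) * a.factorial) * b.factorial : ℝ)
      = (a + b + 1).factorial := by
    rw [add_comm a b]; exact_mod_cast e3
  have p1 : ((a + b + 1).factorial : ℝ) ≠ 0 := by positivity
  have p2 : ((a + 1 : ℕ) : ℝ) ≠ 0 := by positivity
  field_simp
  rw [← e4]
  ring

lemma unan_shapley {N : Type*} [Fintype N] [DecidableEq N] (S : Finset N) (i : N) :
    (∑ F ∈ (Finset.univ.erase i).powerset,
        ((F.card.factorial * (Fintype.card N - F.card - 1).factorial : ℝ) /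
          (Fintype.card N).factorial) *
          ((if S ⊆ insert i F then (1 : ℝ) else 0) - if S ⊆ F then 1 else 0))
      = (if i ∈ S then (1 : ℝ) else 0) / (S.card : ℝ) := by
  by_cases hi : i ∈ S
  · have hcard : (S.erase i).card + 1 = S.card := card_erase_add_one hi
    have hc : Sᶜ.card + S.card = Fintype.card N := card_compl_add_card S
    rw [if_pos hi, ← hcard, ← unan_arith _ (Sᶜ.card),
      ← sum_powerset_apply_card (fun g => ((((S.erase i).card + g).factorial *
        (Sᶜ.card - g).factorial : ℝ) / (((S.erase i).card + Sᶜ.card + 1).factorial : ℝ)))]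
    have h1 : ∀ F ∈ (Finset.univ.erase i).powerset,
        ((F.card.factorial * (Fintype.card N - F.card - 1).factorial : ℝ) /
          (Fintype.card N).factorial) *
          ((if S ⊆ insert i F then (1 : ℝ) else 0) - if S ⊆ F then 1 else 0) =
        if S.erase i ⊆ F then ((F.card.factorial * (Fintype.card N - F.card - 1).factorial : ℝ) /
          (Fintype.card N).factorial) else 0 := by
      intro F hF
      have hiF : i ∉ F := fun h => by simpa using mem_powerset.1 hF h
      have : ¬ S ⊆ F := fun h => hiF (h hi)
      rw [if_neg this]
      simp only [← subset_insert_iff, sub_zero, mul_ite, mul_one, mul_zero]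
    rw [sum_congr rfl h1, ← sum_filter]
    refine sum_nbij' (fun F => F \ S) (fun G => S.erase i ∪ G) ?_ ?_ ?_ ?_ ?_
    · intro F hF
      simp only [mem_powerset]
      intro x; simp
    · intro G hG
      simp only [mem_powerset, mem_filter] at hG ⊢
      refine ⟨fun x hx => ?_, subset_union_left⟩
      have := @hG x
      simp only [mem_union, mem_erase, mem_compl, mem_univ, and_true] at *
      rintro rfl
      tauto
    · intro F hF
      simp only [mem_powerset, mem_filter] at hF
      ext x
      have h1 := @hF.1 x
      have h2 := @hF.2 x
      simp only [mem_union, mem_erase, mem_sdiff, mem_univ, and_true] at *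
      by_cases hx : x = i
      · subst hx; tauto
      · tauto
    · intro G hG
      simp only [mem_powerset] at hG
      ext x
      have := @hG x
      simp only [mem_union, mem_erase, mem_sdiff, mem_compl] at *
      tauto
    · intro F hF
      simp only [mem_powerset, mem_filter] at hF
      have hiF : i ∉ F := fun h => by simpa using hF.1 h
      have e : F \ S = F \ S.erase i := by
        ext x
        simp only [mem_sdiff, mem_erase]
        by_cases hx : x = i
        · subst hx; tauto
        · tauto
      have e2 : (F \ S).card + (S.erase i).card = F.card := by
        rw [e]; exact card_sdiff_add_card_eq_card hF.2
      rw [show (S.erase i).card + (F \ S).card = F.card by omega,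
        show Sᶜ.card - (F \ S).card = Fintype.card N - F.card - 1 by omega,
        show (S.erase i).card + Sᶜ.card + 1 = Fintype.card N by omega]
  · rw [if_neg hi, zero_div]
    refine sum_eq_zero fun F _ => ?_
    simp only [subset_insert_iff, erase_eq_of_notMem hi, sub_self, mul_zero]

/-- For the single-session game `v` under Assumptions 1 and 2, the
Shapley value of player `i` equals
`Σ_{k=1}^{n} ([i ∈ P(E^k)] / n^p_k) · r(k)`. -/
theorem shapley_value_single_session_A12
    {N : Type*} [Fintype N] [DecidableEq N]
    (wp : N) (n : ℕ) (hn : 1 ≤ n) (P : ℕ → N) (r : ℕ → ℝ)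
    (hP0 : P 0 = wp)
    (hPk : ∀ k, 1 ≤ k → k ≤ n → P k ≠ wp)
    (v : Finset N → ℝ)
    (hv : ∀ F : Finset N, v F = ∑ k ∈ Finset.Icc 1 n,
      if (Finset.range (k + 1)).image P ⊆ F then r k else 0)
    (i : N) :
    (∑ F ∈ (Finset.univ.erase i).powerset,
        ((F.card.factorial * (Fintype.card N - F.card - 1).factorial : ℝ) /
          (Fintype.card N).factorial) * (v (insert i F) - v F))
      = ∑ k ∈ Finset.Icc 1 n,
          (if i ∈ (Finset.range (k + 1)).image P then (1 : ℝ) else 0) /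
            (((Finset.range (k + 1)).image P).card : ℝ) * r k := by
  have h : ∀ F : Finset N, ((F.card.factorial * (Fintype.card N - F.card - 1).factorial : ℝ) /
          (Fintype.card N).factorial) * (v (insert i F) - v F) =
      ∑ k ∈ Finset.Icc 1 n, ((F.card.factorial * (Fintype.card N - F.card - 1).factorial : ℝ) /
          (Fintype.card N).factorial) *
          ((if (Finset.range (k + 1)).image P ⊆ insert i F then (1 : ℝ) else 0) -
            if (Finset.range (k + 1)).image P ⊆ F then 1 else 0) * r k := by
    intro F
    rw [hv, hv, ← sum_sub_distrib, mul_sum]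
    refine sum_congr rfl fun k _ => ?_
    rw [mul_assoc, sub_mul, ite_mul, ite_mul, one_mul, zero_mul]
  rw [sum_congr rfl fun F _ => h F, sum_comm]
  refine sum_congr rfl fun k _ => ?_
  rw [← sum_mul, unan_shapley]
end

section
/- Let N be a finite set of players with a distinguished platform player w_p ∈ N, and let S be a finite index set of sessions, where session s is an owner map P_s : {0,1,…,n_s} → N (n_s ≥ 1) with P_s(0) = w_p and P_s(k) ≠ w_p for 1 ≤ k ≤ n_s, together with revenues r_s : {1,…,n_s} → ℝ. Let V be the multi-session game under Assumptions 1 and 2. Then for every player i ∈ N, the Shapley value of i in V equals Sh_i(V) = Σ_{s ∈ S} Σ_{k=1}^{n_s} ([i ∈ P_s(E^k)] / n^p_{s,k}) · r_s(k), where [i ∈ P_s(E^k)] is 1 if i ∈ P_s(E^k) and 0 otherwise. -/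
open Finset

theorem aux_nat (t b : ℕ) :
    (t + 1) * ∑ j ∈ Finset.range (b + 1), b.choose j * ((t + j).factorial * (b - j).factorial)
      = (t + b + 1).factorial := by
  have h1 : ∀ j ∈ Finset.range (b + 1), b.choose j * ((t + j).factorial * (b - j).factorial)
      = b.factorial * t.factorial * (j + t).choose t := by
    intro j hj
    have hj' : j ≤ b := by simpa [Nat.lt_succ_iff] using hj
    have e1 := Nat.choose_mul_factorial_mul_factorial hj'
    have e2 := Nat.add_choose_mul_factorial_mul_factorial j t
    apply Nat.eq_of_mul_eq_mul_left (Nat.factorial_pos j)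
    rw [add_comm t j, ← e1, ← e2]
    ring
  rw [Finset.sum_congr rfl h1, ← Finset.mul_sum, Nat.sum_range_add_choose]
  have e3 := Nat.add_choose_mul_factorial_mul_factorial b (t + 1)
  rw [Nat.factorial_succ t] at e3
  rw [show t + b + 1 = b + (t + 1) by ring, ← e3, show b + t + 1 = b + (t + 1) by ring]
  ring

theorem aux_unan {N : Type*} [Fintype N] [DecidableEq N] (T : Finset N) (i : N) (hi : i ∈ T) :
    ∑ F ∈ (Finset.univ.erase i).powerset with T.erase i ⊆ F,
        ((F.card.factorial * (Fintype.card N - F.card - 1).factorial : ℝ) /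
          (Fintype.card N).factorial) = 1 / (T.card : ℝ) := by
  have hs : (T.erase i) ⊆ Finset.univ.erase i := Finset.erase_subset_erase _ (subset_univ _)
  have e : {F ∈ (Finset.univ.erase i).powerset | T.erase i ⊆ F}
      = ((Finset.univ.erase i) \ T.erase i).powerset.image (T.erase i ∪ ·) := by
    rw [← Finset.Icc_eq_image_powerset hs]
    ext F
    simp [and_comm]
  have hd : ∀ G ∈ ((Finset.univ.erase i) \ T.erase i).powerset, Disjoint (T.erase i) G := by
    intro G hG
    rw [Finset.mem_powerset] at hG
    exact (Finset.disjoint_sdiff).mono_right hG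
  rw [e, Finset.sum_image]
  swap
  · intro G hG G' hG' h
    have h1 := hd G hG
    have h2 := hd G' hG'
    have := congrArg (· \ T.erase i) h
    simpa [Finset.union_sdiff_cancel_left h1, Finset.union_sdiff_cancel_left h2] using this
  obtain ⟨t, ht⟩ : ∃ t, (T.erase i).card = t := ⟨_, rfl⟩
  obtain ⟨b, hb⟩ : ∃ b, ((Finset.univ.erase i) \ T.erase i).card = b := ⟨_, rfl⟩
  have hT : T.card = t + 1 := by rw [← ht, Finset.card_erase_add_one hi]
  have hN : Fintype.card N = t + b + 1 := by
    have h1 := Finset.card_sdiff_add_card_eq_card hs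
    have h2 := Finset.card_erase_add_one (Finset.mem_univ i)
    rw [Finset.card_univ] at h2
    omega
  have h3 : ∀ G ∈ ((Finset.univ.erase i) \ T.erase i).powerset,
      (((T.erase i ∪ G).card.factorial *
        (Fintype.card N - (T.erase i ∪ G).card - 1).factorial : ℝ) /
          (Fintype.card N).factorial) =
      (fun j : ℕ => (((t + j).factorial * (b - j).factorial : ℕ) : ℝ) /
        ((t + b + 1).factorial : ℝ)) G.card := by
    intro G hG
    rw [Finset.card_union_of_disjoint (hd G hG), ht, hN,
      show t + b + 1 - (t + G.card) - 1 = b - G.card by omega]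
    push_cast
    rfl
  rw [Finset.sum_congr rfl h3, Finset.sum_powerset_apply_card (fun j : ℕ => (((t + j).factorial * (b - j).factorial : ℕ) : ℝ) /
        ((t + b + 1).factorial : ℝ)), hb, hT]
  have h4 := congrArg (Nat.cast : ℕ → ℝ) (aux_nat t b)
  have h5 : ((t + b + 1).factorial : ℝ) ≠ 0 := by positivity
  simp only [nsmul_eq_mul, ← mul_div_assoc, ← Finset.sum_div]
  rw [div_eq_div_iff h5 (by positivity), one_mul, ← h4]
  push_cast
  ring

theorem aux_game {N : Type*} [Fintype N] [DecidableEq N] (T : Finset N) (i : N) (c : ℝ) :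
    ∑ F ∈ (Finset.univ.erase i).powerset,
        ((F.card.factorial * (Fintype.card N - F.card - 1).factorial : ℝ) /
          (Fintype.card N).factorial) *
          ((if T ⊆ insert i F then c else 0) - (if T ⊆ F then c else 0))
      = (if i ∈ T then (1 : ℝ) else 0) / (T.card : ℝ) * c := by
  by_cases hi : i ∈ T
  · rw [if_pos hi, ← aux_unan T i hi, Finset.sum_filter, Finset.sum_mul]
    refine Finset.sum_congr rfl fun F hF => ?_
    have hiF : i ∉ F := fun h => by simpa using Finset.mem_powerset.1 hF h
    have : ¬ T ⊆ F := fun h => hiF (h hi)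
    simp only [if_neg this, Finset.subset_insert_iff]
    split_ifs <;> simp
  · rw [if_neg hi]
    simp only [Finset.subset_insert_iff_of_notMem hi, sub_self, mul_zero, zero_div, zero_mul,
      Finset.sum_const_zero]


/-- For the multi-session game `V` under Assumptions 1 and 2, the
Shapley value of player `i` equals
`Σ_{s ∈ S} Σ_{k=1}^{n_s} ([i ∈ P_s(E^k)] / n^p_{s,k}) · r_s(k)`. -/
theorem shapley_value_multi_session_A12
    {N : Type*} [Fintype N] [DecidableEq N] {ι : Type*}
    (wp : N) (S : Finset ι) (ns : ι → ℕ) (P : ι → ℕ → N) (r : ι → ℕ → ℝ)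
    (hns : ∀ s ∈ S, 1 ≤ ns s)
    (hP0 : ∀ s ∈ S, P s 0 = wp)
    (hPk : ∀ s ∈ S, ∀ k, 1 ≤ k → k ≤ ns s → P s k ≠ wp)
    (V : Finset N → ℝ)
    (hV : ∀ F : Finset N, V F = ∑ s ∈ S, ∑ k ∈ Finset.Icc 1 (ns s),
      if (Finset.range (k + 1)).image (P s) ⊆ F then r s k else 0)
    (i : N) :
    (∑ F ∈ (Finset.univ.erase i).powerset,
        ((F.card.factorial * (Fintype.card N - F.card - 1).factorial : ℝ) /
          (Fintype.card N).factorial) * (V (insert i F) - V F))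
      = ∑ s ∈ S, ∑ k ∈ Finset.Icc 1 (ns s),
          (if i ∈ (Finset.range (k + 1)).image (P s) then (1 : ℝ) else 0) /
            (((Finset.range (k + 1)).image (P s)).card : ℝ) * r s k := by
  simp only [hV, ← Finset.sum_sub_distrib, Finset.mul_sum]
  rw [Finset.sum_comm]
  refine Finset.sum_congr rfl fun s _ => ?_
  rw [Finset.sum_comm]
  exact Finset.sum_congr rfl fun k _ => aux_game _ i _
end

section
/- Let N be a finite set of players with a distinguished platform player w_p ∈ N, and let a session be given by an owner map P : {0,1,…,n} → N (n ≥ 1) with P(0) = w_p and P(k) ≠ w_p for 1 ≤ k ≤ n, and revenues r : {1,…,n} → ℝ. Let ṽ be the single-session game under Assumptions 1 and 3. Then for every player i ∈ N, the Shapley value of i in ṽ equals Sh_i(ṽ) = Σ_{k=1}^{n} ([i ∈ {P(0),P(k)}] / 2) · r(k), where [i ∈ {P(0),P(k)}] is 1 if i ∈ {P(0),P(k)} and 0 otherwise. -/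
open Finset

theorem aux_half {N : Type*} [Fintype N] [DecidableEq N] (a b : N) (hab : a ≠ b) :
    (∑ F ∈ (Finset.univ.erase a).powerset,
        ((F.card.factorial * (Fintype.card N - F.card - 1).factorial : ℝ) /
          (Fintype.card N).factorial) * (if b ∈ F then (1:ℝ) else 0)) = 1 / 2 := by
  obtain ⟨S, hS⟩ : ∃ S : Finset N, S = (Finset.univ.erase a).erase b := ⟨_, rfl⟩
  have hbS : b ∉ S := by simp [hS]
  have haS : a ∉ insert b S := by simp [hS, hab]
  have h1 : (Finset.univ.erase a : Finset N) = insert b S := by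
    rw [hS, Finset.insert_erase]; simp [hab.symm]
  have hc : Fintype.card N = S.card + 2 := by
    rw [← Finset.card_univ, ← Finset.insert_erase (Finset.mem_univ a), h1,
      Finset.card_insert_of_notMem haS, Finset.card_insert_of_notMem hbS]
  rw [h1, Finset.sum_powerset_insert hbS, hc]
  have z : ∑ t ∈ S.powerset, ((t.card.factorial * (S.card + 2 - t.card - 1).factorial : ℝ) /
          (S.card + 2).factorial) * (if b ∈ t then (1:ℝ) else 0) = 0 := by
    apply Finset.sum_eq_zero
    intro t ht
    have : b ∉ t := fun h => hbS (Finset.mem_powerset.1 ht h)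
    simp [this]
  rw [z, zero_add]
  have e : ∀ t ∈ S.powerset, (((insert b t).card.factorial *
      (S.card + 2 - (insert b t).card - 1).factorial : ℝ) /
          (S.card + 2).factorial) * (if b ∈ insert b t then (1:ℝ) else 0)
      = (fun j : ℕ => (((j + 1).factorial * (S.card - j).factorial : ℝ) /
          (S.card + 2).factorial)) t.card := by
    intro t ht
    have : b ∉ t := fun h => hbS (Finset.mem_powerset.1 ht h)
    rw [Finset.card_insert_of_notMem this]
    have h2 : S.card + 2 - (t.card + 1) - 1 = S.card - t.card := by omega
    rw [h2]
    simp
  rw [Finset.sum_congr rfl e, Finset.sum_powerset_apply_card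
    (fun j : ℕ => (((j + 1).factorial * (S.card - j).factorial : ℝ) / (S.card + 2).factorial))]
  generalize S.card = m
  have e2 : ∀ j ∈ Finset.range (m + 1), m.choose j • (((j + 1).factorial * (m - j).factorial : ℝ) /
          (m + 2).factorial) = (((j : ℕ) : ℝ) + 1) * (1 / ((m + 2) * (m + 1))) := by
    intro j hj
    have hj' : j ≤ m := by simp at hj; omega
    have h3 : ((m.choose j * j.factorial * (m - j).factorial : ℕ) : ℝ) = m.factorial := by
      rw [Nat.choose_mul_factorial_mul_factorial hj']
    have h4 : (m.factorial : ℝ) ≠ 0 := by positivity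
    have h5 : ((m:ℝ) + 2) ≠ 0 := by positivity
    have h6 : ((m:ℝ) + 1) ≠ 0 := by positivity
    have h7 : ((m + 2).factorial : ℝ) = (m + 2) * ((m + 1) * m.factorial) := by
      rw [Nat.factorial_succ, Nat.factorial_succ]; push_cast; ring
    rw [h7, Nat.factorial_succ, nsmul_eq_mul]
    push_cast at h3 ⊢
    field_simp
    linear_combination h3
  rw [Finset.sum_congr rfl e2, ← Finset.sum_mul]
  have g : ∀ q : ℕ, ∑ j ∈ Finset.range q, ((j : ℝ) + 1) = q * (q + 1) / 2 := by
    intro q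
    induction q with
    | zero => simp
    | succ q ih => rw [Finset.sum_range_succ, ih]; push_cast; ring
  rw [g]
  push_cast
  have h5 : ((m:ℝ) + 2) ≠ 0 := by positivity
  have h6 : ((m:ℝ) + 1) ≠ 0 := by positivity
  field_simp
  ring

/-- For the single-session game `ṽ` under Assumptions 1 and 3, the
Shapley value of player `i` equals `Σ_{k=1}^{n} ([i ∈ {P(0),P(k)}] / 2) · r(k)`. -/
theorem shapley_value_single_session_A13
    {N : Type*} [Fintype N] [DecidableEq N]
    (wp : N) (n : ℕ) (hn : 1 ≤ n) (P : ℕ → N) (r : ℕ → ℝ)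
    (hP0 : P 0 = wp)
    (hPk : ∀ k, 1 ≤ k → k ≤ n → P k ≠ wp)
    (vt : Finset N → ℝ)
    (hvt : ∀ F : Finset N, vt F = ∑ k ∈ Finset.Icc 1 n,
      if ({P 0, P k} : Finset N) ⊆ F then r k else 0)
    (i : N) :
    (∑ F ∈ (Finset.univ.erase i).powerset,
        ((F.card.factorial * (Fintype.card N - F.card - 1).factorial : ℝ) /
          (Fintype.card N).factorial) * (vt (insert i F) - vt F))
      = ∑ k ∈ Finset.Icc 1 n,
          (if i ∈ ({P 0, P k} : Finset N) then (1 : ℝ) else 0) / 2 * r k := by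
  simp only [hvt, ← Finset.sum_sub_distrib, Finset.mul_sum]
  rw [Finset.sum_comm]
  apply Finset.sum_congr rfl
  intro k hk
  rw [Finset.mem_Icc] at hk
  have hne : P k ≠ P 0 := by rw [hP0]; exact hPk k hk.1 hk.2
  have key : ∀ b, i ≠ b → ({P 0, P k} : Finset N) = {i, b} →
      (∑ F ∈ (Finset.univ.erase i).powerset,
        ((F.card.factorial * (Fintype.card N - F.card - 1).factorial : ℝ) /
          (Fintype.card N).factorial) *
          ((if ({P 0, P k} : Finset N) ⊆ insert i F then r k else 0) -
            (if ({P 0, P k} : Finset N) ⊆ F then r k else 0))) = 1 / 2 * r k := by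
    intro b hb hs
    rw [← aux_half i b hb, Finset.sum_mul, hs]
    apply Finset.sum_congr rfl
    intro F hF
    have hi : i ∉ F := fun h => by simpa using Finset.mem_powerset.1 hF h
    simp [Finset.insert_subset_iff, hi, hb.symm]
  by_cases h0 : i = P 0
  · rw [key (P k) (by rw [h0]; exact hne.symm) (by rw [h0])]
    simp [h0]
  by_cases h1 : i = P k
  · rw [key (P 0) h0 (by rw [h1, Finset.pair_comm])]
    simp [h1]
  rw [Finset.sum_eq_zero]
  · simp [h0, h1]
  · intro F hF
    simp [Finset.insert_subset_iff, Ne.symm h0, Ne.symm h1]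
end

section
/- Let N be a finite set of players with a distinguished platform player w_p ∈ N, and let S be a finite index set of sessions, where session s is an owner map P_s : {0,1,…,n_s} → N (n_s ≥ 1) with P_s(0) = w_p and P_s(k) ≠ w_p for 1 ≤ k ≤ n_s, together with revenues r_s : {1,…,n_s} → ℝ. Let Ṽ be the multi-session game under Assumptions 1 and 3. Then for every player i ∈ N, the Shapley value of i in Ṽ equals Sh_i(Ṽ) = Σ_{s ∈ S} Σ_{k=1}^{n_s} ([i ∈ {P_s(0),P_s(k)}] / 2) · r_s(k), where [i ∈ {P_s(0),P_s(k)}] is 1 if i ∈ {P_s(0),P_s(k)} and 0 otherwise. -/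
open Finset

theorem half_aux {N : Type*} [Fintype N] [DecidableEq N] (i a : N) (h : a ≠ i) :
    (∑ F ∈ (Finset.univ.erase i).powerset,
        ((F.card.factorial * (Fintype.card N - F.card - 1).factorial : ℝ) /
          (Fintype.card N).factorial) * (if a ∈ F then (1:ℝ) else 0)) = 1 / 2 := by
  obtain ⟨T, hT⟩ : ∃ T : Finset N, T = (Finset.univ.erase i).erase a := ⟨_, rfl⟩
  have haT : a ∉ T := by simp [hT]
  have hins : Finset.univ.erase i = insert a T := by
    rw [hT, Finset.insert_erase]; simp [h]
  have hcard : Fintype.card N = T.card + 2 := by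
    have h1 : (Finset.univ.erase i).card = T.card + 1 := by
      rw [hins, Finset.card_insert_of_notMem haT]
    have h2 := Finset.card_erase_add_one (Finset.mem_univ i)
    rw [h1, Finset.card_univ] at h2
    omega
  rw [hins, Finset.sum_powerset_insert haT, hcard]
  have z : ∑ F ∈ T.powerset, ((F.card.factorial * (T.card + 2 - F.card - 1).factorial : ℝ) /
          (T.card + 2).factorial) * (if a ∈ F then (1:ℝ) else 0) = 0 := by
    apply Finset.sum_eq_zero
    intro F hF
    rw [Finset.mem_powerset] at hF
    rw [if_neg (fun h => haT (hF h)), mul_zero]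
  rw [z, zero_add]
  have e : ∀ F ∈ T.powerset, (((insert a F).card.factorial *
      (T.card + 2 - (insert a F).card - 1).factorial : ℝ) /
          (T.card + 2).factorial) * (if a ∈ insert a F then (1:ℝ) else 0)
      = (fun g : ℕ => (((g+1).factorial * (T.card - g).factorial : ℝ) /
          (T.card + 2).factorial)) F.card := by
    intro F hF
    rw [Finset.mem_powerset] at hF
    rw [Finset.card_insert_of_notMem (fun h => haT (hF h)), if_pos (Finset.mem_insert_self _ _),
      mul_one]
    have : T.card + 2 - (F.card + 1) - 1 = T.card - F.card := by omega
    simp only [this]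
  rw [Finset.sum_congr rfl e, Finset.sum_powerset_apply_card (fun g : ℕ => (((g+1).factorial * (T.card - g).factorial : ℝ) /
          (T.card + 2).factorial))]
  generalize T.card = m
  have e2 : ∀ g ∈ Finset.range (m+1), m.choose g • (((g+1).factorial * (m - g).factorial : ℝ) /
          (m + 2).factorial) = (g + 1 : ℝ) * (m.factorial / (m+2).factorial) := by
    intro g hg
    have hg' : g ≤ m := by simp at hg; omega
    have := Nat.choose_mul_factorial_mul_factorial hg'
    rw [← this, nsmul_eq_mul, Nat.factorial_succ g]
    push_cast
    ring
  rw [Finset.sum_congr rfl e2, ← Finset.sum_mul]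
  have e3 : ∀ m : ℕ, ∑ g ∈ Finset.range (m+1), (g + 1 : ℝ) = (m+1)*(m+2)/2 := by
    intro m
    induction m with
    | zero => simp
    | succ k ih => rw [Finset.sum_range_succ, ih]; push_cast; ring
  rw [e3, Nat.factorial_succ (m+1), Nat.factorial_succ m]
  have := Nat.factorial_pos m
  push_cast
  field_simp
  ring

theorem pair_aux {N : Type*} [Fintype N] [DecidableEq N] (i p q : N) (h : q ≠ p) (r : ℝ) :
    (∑ F ∈ (Finset.univ.erase i).powerset,
        ((F.card.factorial * (Fintype.card N - F.card - 1).factorial : ℝ) /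
          (Fintype.card N).factorial) * ((if ({p, q} : Finset N) ⊆ insert i F then r else 0)
            - (if ({p, q} : Finset N) ⊆ F then r else 0)))
      = (if i ∈ ({p, q} : Finset N) then (1 : ℝ) else 0) / 2 * r := by
  have key : ∀ a, a ≠ i → (∀ F : Finset N, i ∉ F →
      ((if ({p, q} : Finset N) ⊆ insert i F then r else 0)
            - (if ({p, q} : Finset N) ⊆ F then r else 0)) = (if a ∈ F then (1:ℝ) else 0) * r) →
      (∑ F ∈ (Finset.univ.erase i).powerset,
        ((F.card.factorial * (Fintype.card N - F.card - 1).factorial : ℝ) /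
          (Fintype.card N).factorial) * ((if ({p, q} : Finset N) ⊆ insert i F then r else 0)
            - (if ({p, q} : Finset N) ⊆ F then r else 0))) = 1 / 2 * r := by
    intro a ha hF
    rw [← half_aux i a ha, Finset.sum_mul]
    refine Finset.sum_congr rfl fun F hF' => ?_
    rw [hF F (fun hi => by simpa using (Finset.mem_powerset.1 hF') hi), mul_assoc]
  by_cases h1 : i = p
  · subst h1
    rw [key q h, if_pos (by simp)]
    intro F hF
    simp [Finset.insert_subset_iff, hF, h]
  by_cases h2 : i = q
  · subst h2
    rw [key p (Ne.symm h), if_pos (by simp)]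
    intro F hF
    simp [Finset.insert_subset_iff, hF, Ne.symm h]
  rw [if_neg (by simp [h1, h2])]
  simp [Finset.insert_subset_iff, Ne.symm h1, Ne.symm h2]

/-- For the multi-session game `Ṽ` under Assumptions 1 and 3, the
Shapley value of player `i` equals
`Σ_{s ∈ S} Σ_{k=1}^{n_s} ([i ∈ {P_s(0),P_s(k)}] / 2) · r_s(k)`. -/
theorem shapley_value_multi_session_A13
    {N : Type*} [Fintype N] [DecidableEq N] {ι : Type*}
    (wp : N) (S : Finset ι) (ns : ι → ℕ) (P : ι → ℕ → N) (r : ι → ℕ → ℝ)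
    (hns : ∀ s ∈ S, 1 ≤ ns s)
    (hP0 : ∀ s ∈ S, P s 0 = wp)
    (hPk : ∀ s ∈ S, ∀ k, 1 ≤ k → k ≤ ns s → P s k ≠ wp)
    (Vt : Finset N → ℝ)
    (hVt : ∀ F : Finset N, Vt F = ∑ s ∈ S, ∑ k ∈ Finset.Icc 1 (ns s),
      if ({P s 0, P s k} : Finset N) ⊆ F then r s k else 0)
    (i : N) :
    (∑ F ∈ (Finset.univ.erase i).powerset,
        ((F.card.factorial * (Fintype.card N - F.card - 1).factorial : ℝ) /
          (Fintype.card N).factorial) * (Vt (insert i F) - Vt F))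
      = ∑ s ∈ S, ∑ k ∈ Finset.Icc 1 (ns s),
          (if i ∈ ({P s 0, P s k} : Finset N) then (1 : ℝ) else 0) / 2 * r s k := by
  simp only [hVt, ← Finset.sum_sub_distrib, Finset.mul_sum]
  rw [Finset.sum_comm]
  refine Finset.sum_congr rfl fun s hs => ?_
  rw [Finset.sum_comm]
  refine Finset.sum_congr rfl fun k hk => ?_
  rw [Finset.mem_Icc] at hk
  exact pair_aux i (P s 0) (P s k) (by rw [hP0 s hs]; exact hPk s hs k hk.1 hk.2) (r s k)
end

section
/- Let N be a finite set of players with a distinguished platform player w_p ∈ N, and let a session be given by an owner map P : {0,1,…,n} → N (n ≥ 1) with P(0) = w_p and P(k) ≠ w_p for 1 ≤ k ≤ n, and revenues r : {1,…,n} → ℝ with r(k) ≥ 0 for all k. Let v be the single-session game under Assumptions 1 and 2, and define the allocation x_i := Σ_{k=1}^{n} ([i ∈ P(E^k)] / n^p_k) · r(k) for each i ∈ N ([i ∈ P(E^k)] is 1 if i ∈ P(E^k) and 0 otherwise). Then x lies in the core of v: Σ_{i ∈ N} x_i = v(N) and Σ_{i ∈ F} x_i ≥ v(F) for every coalition F ⊆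 N. -/
open Finset

/-- For the single-session game `v` under Assumptions 1 and 2 with
nonnegative revenues, the allocation `x_i = Σ_{k=1}^{n} ([i ∈ P(E^k)] / n^p_k) · r(k)`
lies in the core of `v`. -/
theorem shapley_allocation_in_core_A12
    {N : Type*} [Fintype N] [DecidableEq N]
    (wp : N) (n : ℕ) (hn : 1 ≤ n) (P : ℕ → N) (r : ℕ → ℝ)
    (hP0 : P 0 = wp)
    (hPk : ∀ k, 1 ≤ k → k ≤ n → P k ≠ wp)
    (hr : ∀ k, 1 ≤ k → k ≤ n → 0 ≤ r k)
    (v : Finset N → ℝ)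
    (hv : ∀ F : Finset N, v F = ∑ k ∈ Finset.Icc 1 n,
      if (Finset.range (k + 1)).image P ⊆ F then r k else 0)
    (x : N → ℝ)
    (hx : ∀ i : N, x i = ∑ k ∈ Finset.Icc 1 n,
      (if i ∈ (Finset.range (k + 1)).image P then (1 : ℝ) else 0) /
        (((Finset.range (k + 1)).image P).card : ℝ) * r k) :
    (∑ i : N, x i = v Finset.univ) ∧ ∀ F : Finset N, v F ≤ ∑ i ∈ F, x i := by
  have key : ∀ (k : ℕ) (F : Finset N), (Finset.range (k + 1)).image P ⊆ F →
      ∑ i ∈ F, (if i ∈ (Finset.range (k + 1)).image P then (1 : ℝ) else 0) /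
        (((Finset.range (k + 1)).image P).card : ℝ) * r k = r k := by
    intro k F hF
    have hne : ((Finset.range (k + 1)).image P).Nonempty :=
      Finset.Nonempty.image ⟨0, by simp⟩ P
    generalize (Finset.range (k + 1)).image P = S at hF hne ⊢
    have hc : (S.card : ℝ) ≠ 0 := by
      exact_mod_cast hne.card_pos.ne'
    rw [← Finset.sum_mul, ← Finset.sum_div, Finset.sum_ite_mem,
      Finset.inter_eq_right.mpr hF]
    simp [hc]
  constructor
  · simp only [hx, hv]
    rw [Finset.sum_comm]
    refine Finset.sum_congr rfl fun k _ => ?_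
    rw [key k _ (Finset.subset_univ _), if_pos (Finset.subset_univ _)]
  · intro F
    simp only [hx, hv]
    rw [Finset.sum_comm]
    refine Finset.sum_le_sum fun k hk => ?_
    have hk' := Finset.mem_Icc.mp hk
    have h0 := hr k hk'.1 hk'.2
    by_cases h : (Finset.range (k + 1)).image P ⊆ F
    · rw [key k _ h, if_pos h]
    · rw [if_neg h]
      refine Finset.sum_nonneg fun i _ => mul_nonneg (div_nonneg ?_ (Nat.cast_nonneg _)) h0
      split_ifs <;> norm_num
end

section
/- Let N be a finite set of players with a distinguished platform player w_p ∈ N, and let a session be given by an owner map P : {0,1,…,n} → N (n ≥ 1) with P(0) = w_p and P(k) ≠ w_p for 1 ≤ k ≤ n, and revenues r : {1,…,n} → ℝ with r(k) ≥ 0 for all k. Let ṽ be the single-session game under Assumptions 1 and 3, and define the allocation x̃_i := Σ_{k=1}^{n} ([i ∈ {P(0),P(k)}] / 2) · r(k) for each i ∈ N ([i ∈ {P(0),P(k)}] is 1 if i ∈ {P(0),P(k)} and 0 otherwise). Then x̃ lies in the core of ṽ: Σ_{i ∈ N} x̃_i = ṽ(N) and Σ_{i ∈ F} x̃_i ≥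 ṽ(F) for every coalition F ⊆ N. -/
open Finset

/-- For the single-session game `ṽ` under Assumptions 1 and 3 with
nonnegative revenues, the allocation `x̃_i = Σ_{k=1}^{n} ([i ∈ {P(0),P(k)}] / 2) · r(k)`
lies in the core of `ṽ`. -/
theorem shapley_allocation_in_core_A13
    {N : Type*} [Fintype N] [DecidableEq N]
    (wp : N) (n : ℕ) (hn : 1 ≤ n) (P : ℕ → N) (r : ℕ → ℝ)
    (hP0 : P 0 = wp)
    (hPk : ∀ k, 1 ≤ k → k ≤ n → P k ≠ wp)
    (hr : ∀ k, 1 ≤ k → k ≤ n → 0 ≤ r k)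
    (vt : Finset N → ℝ)
    (hvt : ∀ F : Finset N, vt F = ∑ k ∈ Finset.Icc 1 n,
      if ({P 0, P k} : Finset N) ⊆ F then r k else 0)
    (xt : N → ℝ)
    (hxt : ∀ i : N, xt i = ∑ k ∈ Finset.Icc 1 n,
      (if i ∈ ({P 0, P k} : Finset N) then (1 : ℝ) else 0) / 2 * r k) :
    (∑ i : N, xt i = vt Finset.univ) ∧ ∀ F : Finset N, vt F ≤ ∑ i ∈ F, xt i := by
  have key : ∀ F : Finset N, ∑ i ∈ F, xt i = ∑ k ∈ Finset.Icc 1 n,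
      ((F ∩ ({P 0, P k} : Finset N)).card : ℝ) / 2 * r k := by
    intro F
    simp_rw [hxt]
    rw [Finset.sum_comm]
    refine Finset.sum_congr rfl fun k _ => ?_
    rw [← Finset.sum_mul, ← Finset.sum_div, Finset.sum_boole, Finset.filter_mem_eq_inter]
  have hc : ∀ k ∈ Finset.Icc 1 n, ({P 0, P k} : Finset N).card = 2 := by
    intro k hk
    rw [Finset.mem_Icc] at hk
    exact Finset.card_pair (fun h => hPk k hk.1 hk.2 (h.symm.trans hP0))
  constructor
  · rw [key, hvt]
    refine Finset.sum_congr rfl fun k hk => ?_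
    rw [Finset.univ_inter, hc k hk, if_pos (Finset.subset_univ _)]
    norm_num
  · intro F
    rw [key, hvt]
    refine Finset.sum_le_sum fun k hk => ?_
    have hk' := Finset.mem_Icc.mp hk
    have h0 := hr k hk'.1 hk'.2
    split_ifs with h
    · rw [Finset.inter_eq_right.mpr h, hc k hk]
      norm_num
    · positivity
end

section
/- Let N be a finite set of players with a distinguished platform player w_p ∈ N, let a session be given by an owner map P : {0,1,…,n} → N (n ≥ 1) with P(0) = w_p and P(k) ≠ w_p for 1 ≤ k ≤ n, and revenues r : {1,…,n} → ℝ, and let α be any discrete attenuation function. Then the α-Shapley rule is efficient: Σ_{i ∈ N} ES^α_i = Σ_{k=1}^{n} r(k). -/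
open Finset

/-- For any discrete attenuation function `α`, the `α`-Shapley rule
is efficient: `Σ_{i ∈ N} ES^α_i = Σ_{k=1}^{n} r(k)`. -/
theorem alpha_shapley_efficient
    {N : Type*} [Fintype N] [DecidableEq N]
    (wp : N) (n : ℕ) (hn : 1 ≤ n) (P : ℕ → N) (r : ℕ → ℝ)
    (hP0 : P 0 = wp)
    (hPk : ∀ k, 1 ≤ k → k ≤ n → P k ≠ wp)
    (α : ℕ → ℝ)
    (hα01 : ∀ k : ℕ, 0 ≤ α k ∧ α k ≤ 1)
    (hα0 : α 0 = 1)
    (hαmono : ∀ k : ℕ, 1 ≤ k → α k ≤ α (k - 1))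
    (ES : N → ℝ)
    (hES : ∀ i : N, ES i = ∑ k ∈ Finset.Icc 1 n,
      (((if i = wp then (1 : ℝ) else 0) +
          ∑ l ∈ (Finset.Icc 1 k).filter (fun l => P l = i), α (k - l)) /
        (1 + ∑ j ∈ Finset.Icc 1 k, α (k - j))) * r k) :
    ∑ i : N, ES i = ∑ k ∈ Finset.Icc 1 n, r k := by
  simp only [hES]
  rw [Finset.sum_comm]
  refine Finset.sum_congr rfl fun k _ => ?_
  have hpos : (0 : ℝ) < 1 + ∑ j ∈ Finset.Icc 1 k, α (k - j) := by
    have : 0 ≤ ∑ j ∈ Finset.Icc 1 k, α (k - j) :=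
      Finset.sum_nonneg fun j _ => (hα01 _).1
    linarith
  rw [← Finset.sum_mul, ← Finset.sum_div, Finset.sum_add_distrib,
    Finset.sum_fiberwise (Finset.Icc 1 k) P (fun l => α (k - l)),
    Finset.sum_ite_eq' Finset.univ wp, if_pos (Finset.mem_univ _),
    div_self hpos.ne', one_mul]
end

section
/- Let N be a finite set of players with a distinguished platform player w_p ∈ N, and let a session be given by an owner map P : {0,1,…,n} → N (n ≥ 1) with P(0) = w_p and P(k) ≠ w_p for 1 ≤ k ≤ n, and revenues r : {1,…,n} → ℝ. If α is the attenuation function with α(0) = 1 and α(m) = 0 for all m ≥ 1 (the exponential attenuation with θ = 0, using the convention 0⁰ = 1), then the α-Shapley rule coincides with the Shapley value of the game under Assumptions 1 and 3: ES^α_i = Σ_{k=1}^{n} ([i ∈ {P(0),P(k)}] / 2) · r(k) for every player i ∈ N. -/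
open Finset

/-- If `α(0) = 1` and `α(m) = 0` for all `m ≥ 1` (exponential
attenuation with `θ = 0`), the `α`-Shapley rule coincides with the Shapley value
of the game under Assumptions 1 and 3:
`ES^α_i = Σ_{k=1}^{n} ([i ∈ {P(0),P(k)}] / 2) · r(k)`. -/
theorem alpha_shapley_theta_zero_eq_shapley_A13
    {N : Type*} [Fintype N] [DecidableEq N]
    (wp : N) (n : ℕ) (hn : 1 ≤ n) (P : ℕ → N) (r : ℕ → ℝ)
    (hP0 : P 0 = wp)
    (hPk : ∀ k, 1 ≤ k → k ≤ n → P k ≠ wp)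
    (α : ℕ → ℝ) (hα0 : α 0 = 1) (hα1 : ∀ m : ℕ, 1 ≤ m → α m = 0)
    (ESα : N → ℝ)
    (hESα : ∀ i : N, ESα i = ∑ k ∈ Finset.Icc 1 n,
      (((if i = wp then (1 : ℝ) else 0) +
          ∑ l ∈ (Finset.Icc 1 k).filter (fun l => P l = i), α (k - l)) /
        (1 + ∑ j ∈ Finset.Icc 1 k, α (k - j))) * r k)
    (i : N) :
    ESα i = ∑ k ∈ Finset.Icc 1 n,
      (if i ∈ ({P 0, P k} : Finset N) then (1 : ℝ) else 0) / 2 * r k := by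
  rw [hESα i]
  refine Finset.sum_congr rfl fun k hk => ?_
  obtain ⟨h1, h2⟩ := Finset.mem_Icc.1 hk
  have hne := hPk k h1 h2
  have hα : ∀ l ∈ Finset.Icc 1 k, α (k - l) = if l = k then (1 : ℝ) else 0 := by
    intro l hl
    have hl' := Finset.mem_Icc.1 hl
    split_ifs with h
    · subst h
      simpa using hα0
    · exact hα1 _ (by omega)
  have hd : ∑ j ∈ Finset.Icc 1 k, α (k - j) = 1 := by
    rw [Finset.sum_congr rfl hα, Finset.sum_ite_eq' (Finset.Icc 1 k) k]
    simp [h1]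
  have hs : ∑ l ∈ (Finset.Icc 1 k).filter (fun l => P l = i), α (k - l)
      = if P k = i then (1 : ℝ) else 0 := by
    rw [Finset.sum_congr rfl (fun l hl => hα l (Finset.mem_filter.1 hl).1),
      Finset.sum_ite_eq']
    simp [h1]
  rw [hd, hs, hP0]
  simp only [Finset.mem_insert, Finset.mem_singleton]
  congr 1
  by_cases ha : i = wp
  · subst ha
    simp [hne]
    norm_num
  · by_cases hb : P k = i
    · simp [ha, hb]
      norm_num
    · simp [ha, hb, Ne.symm hb]
end

section
/- Let N and N' be finite sets of players with distinguished platform players w_p ∈ N and w_p' ∈ N', let a session be given by an owner map P : {0,1,…,n} → N (n ≥ 1) with P(0) = w_p and P(k) ≠ w_p for 1 ≤ k ≤ n, and revenues r : {1,…,n} → ℝ, and let g : N → N' be a map with g(w_p) = w_p' and g(i) ≠ w_p' for all i ≠ w_p (so that g∘P is a valid owner map for a session over N'). Then the event-Shapley rule is non-manipulable: for every j ∈ N', the event-Shapley share of j in the relabeled session (owner map g∘P, revenues r) equals Σ_{i ∈ N : g(i) = j} ES_i, the sum of the event-Shapley shares in the original session of all players merged into j. -/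
open Finset

/-- The event-Shapley rule is non-manipulable: if players are
relabeled (merged) via `g : N → N'` preserving the platform, then for every
`j ∈ N'`, the event-Shapley share of `j` in the relabeled session equals the sum
of the event-Shapley shares in the original session of all players merged into `j`. -/
theorem event_shapley_non_manipulable
    {N : Type*} [Fintype N] [DecidableEq N]
    {N' : Type*} [Fintype N'] [DecidableEq N']
    (wp : N) (wp' : N') (n : ℕ) (hn : 1 ≤ n) (P : ℕ → N) (r : ℕ → ℝ)
    (hP0 : P 0 = wp)
    (hPk : ∀ k, 1 ≤ k → k ≤ n → P k ≠ wp)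
    (g : N → N') (hg0 : g wp = wp') (hg : ∀ i : N, i ≠ wp → g i ≠ wp')
    (ES : N → ℝ) (ES' : N' → ℝ)
    (hES : ∀ i : N, ES i = ∑ k ∈ Finset.Icc 1 n,
      ((((Finset.range (k + 1)).filter (fun l => P l = i)).card : ℝ) / (k + 1)) * r k)
    (hES' : ∀ j : N', ES' j = ∑ k ∈ Finset.Icc 1 n,
      ((((Finset.range (k + 1)).filter (fun l => g (P l) = j)).card : ℝ) / (k + 1)) * r k)
    (j : N') :
    ES' j = ∑ i ∈ Finset.univ.filter (fun i => g i = j), ES i := by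
  rw [hES' j, Finset.sum_congr rfl (fun i _ => hES i), Finset.sum_comm]
  refine Finset.sum_congr rfl fun k _ => ?_
  rw [← Finset.sum_mul, ← Finset.sum_div, ← Nat.cast_sum]
  congr 3
  rw [Finset.card_eq_sum_card_fiberwise (f := P) (t := Finset.univ.filter (fun i => g i = j))
    (fun l hl => by simpa using (Finset.mem_filter.mp hl).2)]
  refine Finset.sum_congr rfl fun i hi => ?_
  have hi' := (Finset.mem_filter.mp hi).2
  congr 1
  ext l
  simp only [Finset.mem_filter]
  constructor
  · rintro ⟨⟨h1, _⟩, h3⟩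
    exact ⟨h1, h3⟩
  · rintro ⟨h1, h3⟩
    exact ⟨⟨h1, by rw [h3, hi']⟩, h3⟩
end

section
/- Let N and N' be finite sets of players with distinguished platform players w_p ∈ N and w_p' ∈ N', let a session be given by an owner map P : {0,1,…,n} → N (n ≥ 1) with P(0) = w_p and P(k) ≠ w_p for 1 ≤ k ≤ n, and revenues r : {1,…,n} → ℝ, and let g : N → N' be a map with g(w_p) = w_p' and g(i) ≠ w_p' for all i ≠ w_p (so that g∘P is a valid owner map for a session over N'). Then the Shapley allocation of the game under Assumptions 1 and 3 is non-manipulable: for every j ∈ N', Σ_{k=1}^{n} ([j ∈ {g(P(0)), g(P(k))}] / 2) · r(k) = Σ_{i ∈ N : g(i) = j} Σ_{k=1}^{n} ([i ∈ {P(0), P(k)}] / 2) · r(k), where [·] denotes the indicator. -/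
open Finset

/-- The Shapley allocation of the game under Assumptions 1 and 3 is
non-manipulable: if players are relabeled (merged) via `g : N → N'` preserving the
platform, then for every `j ∈ N'`,
`Σ_{k=1}^{n} ([j ∈ {g(P(0)), g(P(k))}] / 2) · r(k)
  = Σ_{i : g(i) = j} Σ_{k=1}^{n} ([i ∈ {P(0), P(k)}] / 2) · r(k)`. -/
theorem shapley_allocation_A13_non_manipulable
    {N : Type*} [Fintype N] [DecidableEq N]
    {N' : Type*} [Fintype N'] [DecidableEq N']
    (wp : N) (wp' : N') (n : ℕ) (hn : 1 ≤ n) (P : ℕ → N) (r : ℕ → ℝ)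
    (hP0 : P 0 = wp)
    (hPk : ∀ k, 1 ≤ k → k ≤ n → P k ≠ wp)
    (g : N → N') (hg0 : g wp = wp') (hg : ∀ i : N, i ≠ wp → g i ≠ wp')
    (j : N') :
    (∑ k ∈ Finset.Icc 1 n,
        (if j ∈ ({g (P 0), g (P k)} : Finset N') then (1 : ℝ) else 0) / 2 * r k)
      = ∑ i ∈ Finset.univ.filter (fun i => g i = j), ∑ k ∈ Finset.Icc 1 n,
          (if i ∈ ({P 0, P k} : Finset N) then (1 : ℝ) else 0) / 2 * r k := by
  have key : ∀ (x a b : N), a ≠ b →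
      (if x ∈ ({a, b} : Finset N) then (1 : ℝ) else 0)
        = (if x = a then (1 : ℝ) else 0) + (if x = b then (1 : ℝ) else 0) := by
    intro x a b hab
    by_cases h1 : x = a
    · subst h1
      simp [hab]
    · simp [h1]
  have key' : ∀ (x a b : N'), a ≠ b →
      (if x ∈ ({a, b} : Finset N') then (1 : ℝ) else 0)
        = (if x = a then (1 : ℝ) else 0) + (if x = b then (1 : ℝ) else 0) := by
    intro x a b hab
    by_cases h1 : x = a
    · subst h1
      simp [hab]
    · simp [h1]
  rw [Finset.sum_comm]
  refine Finset.sum_congr rfl fun k hk => ?_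
  rw [Finset.mem_Icc] at hk
  have h1 : P 0 ≠ P k := by
    rw [hP0]
    exact (hPk k hk.1 hk.2).symm
  have h2 : g (P 0) ≠ g (P k) := by
    rw [hP0, hg0]
    exact (hg _ (hPk k hk.1 hk.2)).symm
  rw [← Finset.sum_mul, ← Finset.sum_div, key' _ _ _ h2]
  simp_rw [fun x => key x _ _ h1]
  rw [Finset.sum_add_distrib, Finset.sum_ite_eq', Finset.sum_ite_eq']
  simp [eq_comm]
end
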